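/- Let Ω be a finite probability space, and let X : Ω → 𝒳, Y : Ω → 𝒴, Z : Ω → 𝒵 be random variables with 𝒳, 𝒴, 𝒵 finite and nonempty. Then the weak chain rule holds: H̃∞(X | (Y, Z)) ≥ H̃∞(X | Y) − log₂|𝒵|. -/

import Mathlib

open Finset Real

/-- Probability of an event `E` under the weight function `p` on a finite sample space. -/
noncomputable def pr {Ω : Type*} [Fintype Ω] (p : Ω → ℝ) (E : Set Ω) : ℝ :=
  ∑ ω, E.indicator p ω

/-- `P[X = x]`. -/
noncomputable def prEq {Ω 𝒳 : Type*} [Fintype Ω] (p : Ω → ℝ) (X : Ω → 𝒳) (x : 𝒳) : ℝ :=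
  pr p {ω | X ω = x}

/-- `P[X = x | Y = y]`, taken to be `0` when `P[Y = y] = 0`. -/
noncomputable def condProb {Ω 𝒳 𝒴 : Type*} [Fintype Ω]
    (p : Ω → ℝ) (X : Ω → 𝒳) (x : 𝒳) (Y : Ω → 𝒴) (y : 𝒴) : ℝ :=
  if prEq p Y y = 0 then 0 else pr p {ω | X ω = x ∧ Y ω = y} / prEq p Y y

/-- Average min-entropy `H̃∞(X | Y)`. -/
noncomputable def avgMinEntropy {Ω 𝒳 𝒴 : Type*} [Fintype Ω]
    [Fintype 𝒳] [Nonempty 𝒳] [Fintype 𝒴]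
    (p : Ω → ℝ) (X : Ω → 𝒳) (Y : Ω → 𝒴) : ℝ :=
  - Real.logb 2 (∑ y : 𝒴, prEq p Y y *
      (Finset.univ.sup' Finset.univ_nonempty fun x : 𝒳 => condProb p X x Y y))

/-- Min-entropy `H∞(X)`. -/
noncomputable def minEntropy {Ω 𝒳 : Type*} [Fintype Ω] [Fintype 𝒳] [Nonempty 𝒳]
    (p : Ω → ℝ) (X : Ω → 𝒳) : ℝ :=
  - Real.logb 2 (Finset.univ.sup' Finset.univ_nonempty fun x : 𝒳 => prEq p X x)

theorem pr_mono_aux {Ω : Type*} [Fintype Ω] (p : Ω → ℝ) (hp : ∀ ω, 0 ≤ p ω) {E F : Set Ω}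
    (h : E ⊆ F) : pr p E ≤ pr p F :=
  Finset.sum_le_sum fun ω _ => Set.indicator_le_indicator_of_subset h hp ω

theorem pr_nonneg_aux {Ω : Type*} [Fintype Ω] (p : Ω → ℝ) (hp : ∀ ω, 0 ≤ p ω) (E : Set Ω) :
    0 ≤ pr p E :=
  Finset.sum_nonneg fun ω _ => Set.indicator_nonneg (fun ω _ => hp ω) ω

theorem mul_condProb_aux {Ω 𝒳 𝒴 : Type*} [Fintype Ω] (p : Ω → ℝ) (hp : ∀ ω, 0 ≤ p ω)
    (X : Ω → 𝒳) (x : 𝒳) (Y : Ω → 𝒴) (y : 𝒴) :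
    prEq p Y y * condProb p X x Y y = pr p {ω | X ω = x ∧ Y ω = y} := by
  unfold condProb
  split_ifs with h
  · have h1 : pr p {ω | X ω = x ∧ Y ω = y} ≤ prEq p Y y :=
      pr_mono_aux p hp fun ω hω => hω.2
    have h2 := pr_nonneg_aux p hp {ω | X ω = x ∧ Y ω = y}
    rw [mul_zero]
    linarith
  · field_simp

theorem le_term_aux {Ω 𝒳 𝒴 : Type*} [Fintype Ω] [Fintype 𝒳] [Nonempty 𝒳]
    (p : Ω → ℝ) (hp : ∀ ω, 0 ≤ p ω) (X : Ω → 𝒳) (x : 𝒳) (Y : Ω → 𝒴) (y : 𝒴) :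
    pr p {ω | X ω = x ∧ Y ω = y} ≤ prEq p Y y *
      (Finset.univ.sup' Finset.univ_nonempty fun x : 𝒳 => condProb p X x Y y) := by
  rw [← mul_condProb_aux p hp]
  exact mul_le_mul_of_nonneg_left
    (Finset.le_sup' (fun x : 𝒳 => condProb p X x Y y) (Finset.mem_univ x)) (pr_nonneg_aux p hp _)

theorem term_eq_aux {Ω 𝒳 𝒴 : Type*} [Fintype Ω] [Fintype 𝒳] [Nonempty 𝒳]
    (p : Ω → ℝ) (hp : ∀ ω, 0 ≤ p ω) (X : Ω → 𝒳) (Y : Ω → 𝒴) (y : 𝒴) :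
    ∃ x, prEq p Y y *
      (Finset.univ.sup' Finset.univ_nonempty fun x : 𝒳 => condProb p X x Y y) =
      pr p {ω | X ω = x ∧ Y ω = y} := by
  obtain ⟨x, -, hx⟩ := Finset.exists_mem_eq_sup' Finset.univ_nonempty
    (fun x : 𝒳 => condProb p X x Y y)
  exact ⟨x, by rw [hx, mul_condProb_aux p hp]⟩

theorem stmt_4 {Ω 𝒳 𝒴 𝒵 : Type*} [Fintype Ω]
    [Fintype 𝒳] [Nonempty 𝒳] [Fintype 𝒴] [Nonempty 𝒴] [Fintype 𝒵] [Nonempty 𝒵]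
    (p : Ω → ℝ) (hp : ∀ ω, 0 ≤ p ω) (hsum : ∑ ω, p ω = 1)
    (X : Ω → 𝒳) (Y : Ω → 𝒴) (Z : Ω → 𝒵) :
    avgMinEntropy p X (fun ω => (Y ω, Z ω)) ≥
      avgMinEntropy p X Y - Real.logb 2 (Fintype.card 𝒵) := by
  have hle : (∑ y : 𝒴 × 𝒵, prEq p (fun ω => (Y ω, Z ω)) y *
      (Finset.univ.sup' Finset.univ_nonempty
        fun x : 𝒳 => condProb p X x (fun ω => (Y ω, Z ω)) y)) ≤
      (∑ y : 𝒴, prEq p Y y *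
      (Finset.univ.sup' Finset.univ_nonempty fun x : 𝒳 => condProb p X x Y y)) *
        (Fintype.card 𝒵 : ℝ) := by
    rw [Fintype.sum_prod_type, Finset.sum_mul]
    refine Finset.sum_le_sum fun y _ => ?_
    rw [mul_comm _ (Fintype.card 𝒵 : ℝ), ← nsmul_eq_mul]
    refine Finset.sum_le_card_nsmul _ _ _ fun z _ => ?_
    obtain ⟨x, hx⟩ := term_eq_aux p hp X (fun ω => (Y ω, Z ω)) (y, z)
    rw [hx]
    refine le_trans (pr_mono_aux p hp ?_) (le_term_aux p hp X x Y y)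
    rintro ω ⟨h1, h2⟩
    exact ⟨h1, congrArg Prod.fst h2⟩
  have hpos : 0 < ∑ y : 𝒴 × 𝒵, prEq p (fun ω => (Y ω, Z ω)) y *
      (Finset.univ.sup' Finset.univ_nonempty
        fun x : 𝒳 => condProb p X x (fun ω => (Y ω, Z ω)) y) := by
    obtain ⟨ω, -, hω⟩ : ∃ ω ∈ Finset.univ, 0 < p ω := by
      by_contra! h
      have := Finset.sum_nonpos h
      linarith
    refine Finset.sum_pos' (fun y _ => ?_) ⟨(Y ω, Z ω), Finset.mem_univ _, ?_⟩
    · exact le_trans (pr_nonneg_aux p hp _)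
        (le_term_aux p hp X (Classical.arbitrary 𝒳) (fun ω => (Y ω, Z ω)) y)
    · refine lt_of_lt_of_le ?_ (le_term_aux p hp X (X ω) (fun ω => (Y ω, Z ω)) (Y ω, Z ω))
      refine Finset.sum_pos' (fun ω _ => Set.indicator_nonneg (fun ω _ => hp ω) ω)
        ⟨ω, Finset.mem_univ _, ?_⟩
      rw [Set.indicator_of_mem (by exact ⟨rfl, rfl⟩)]
      exact hω
  have hc : (0 : ℝ) < Fintype.card 𝒵 := by exact_mod_cast Fintype.card_pos
  have hG := pos_of_mul_pos_left (lt_of_lt_of_le hpos hle) hc.le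
  have hlog := Real.logb_le_logb_of_le (b := 2) (by norm_num) hpos hle
  rw [Real.logb_mul hG.ne' hc.ne'] at hlog
  unfold avgMinEntropy
  linarith
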